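/- Let X ⊆ ℝ^m and Y ⊆ ℝ^n be nonempty bounded convex sets of finite positive Lebesgue measure, and let F : X × Y → ℝ be a continuous convex-concave function with |F(ξ,η)| ≤ 1 for all (ξ,η). Let ε ∈ (0,1] and t ≥ 0 be reals and fix x ∈ X, y ∈ Y. Define p(ξ) = e^{−(εt/2) F(ξ, y)}, q(η) = e^{(εt/2) F(x, η)}, ‖p‖₁ = ∫_X p, ‖q‖₁ = ∫_Y q, P(ξ,η) = ∫_X e^{−(ε(t+1)/2) F(ξ', (t y + η)/(t+1))} dξ' and Q(ξ,η) = ∫_Y e^{(ε(t+1)/2) F((t x + ξ)/(t+1), η')} dη'. Let p̂ : X → ℝ≥0 and q̂ : Y → ℝ≥0 be integrable functions with ‖p̂‖₁ = ∫_X p̂ > 0 and ‖q̂‖₁ = ∫_Y q̂ > 0 such that for every measurable X' ⊆ X, |∫_{X'} p̂ / ‖p̂‖₁ − ∫_{X'} p / ‖p‖₁| ≤ ε/4, and for every measurable Y' ⊆ Y, |∫_{Y'} q̂ / ‖q̂‖₁ − ∫_{Y'} q / ‖q‖₁| ≤ ε/4. Then (1/(‖p̂‖₁ ‖q̂‖₁))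 ∫_X ∫_Y P(ξ,η) Q(ξ,η) p̂(ξ) q̂(η) dη dξ ≤ (1 + (43/36) ε²) ‖p‖₁ ‖q‖₁. -/

import Mathlib

open MeasureTheory

/-!
Averaging over the new points decouples the potential into an `X`-factor and a `Y`-factor. Each is
expanded to second order by convexity and `exp z ≤ 1 + z + (2/3) z²`; replacing the sampling
distribution by the exponential-weight distribution costs another `ε²/4`. The two first-order terms
are `± ε/2` times the mean of `F` under the product of the exponential-weight distributions, so they
cancel in the product of the factors, leaving `(1 + (5/12) ε²)² ≤ 1 + (43/36) ε²`.
-/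

theorem exp_le_one_add_add_two_thirds_mul_sq {z : ℝ} (hz : |z| ≤ 1 / 2) :
    Real.exp z ≤ 1 + z + 2 / 3 * z ^ 2 := by
  have htaylor : |Real.exp z - (1 + z + z ^ 2 / 2)| ≤ 2 / 9 * |z| ^ 3 := by
    have hbound := Real.exp_bound (x := z) (n := 3) (hz.trans (by norm_num)) three_pos
    norm_num [Finset.sum_range_succ, Nat.factorial] at hbound
    linarith
  have hcube : |z| ^ 3 ≤ 1 / 2 * z ^ 2 := by
    rw [← sq_abs z, pow_succ']
    gcongr
  linarith [le_of_abs_le htaylor, sq_nonneg z]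

section Integral

variable {α : Type*} [MeasurableSpace α]

theorem integrable_exp_mul_of_abs_le_one {μ : Measure α} [IsFiniteMeasure μ] {g : α → ℝ}
    (hg : AEMeasurable g μ) (hg1 : ∀ᵐ a ∂μ, |g a| ≤ 1) (c : ℝ) :
    Integrable (fun a => Real.exp (c * g a)) μ :=
  ProbabilityTheory.integrable_exp_mul_of_mem_Icc hg (hg1.mono fun _ => abs_le.1)

theorem integrable_uncurry_of_abs_le_one {β : Type*} [MeasurableSpace β] {μ : Measure α}
    [IsFiniteMeasure μ] {ν : Measure β} [IsFiniteMeasure ν] {S : Set α} {T : Set β}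
    (hμS : ∀ᵐ a ∂μ, a ∈ S) (hνT : ∀ᵐ b ∂ν, b ∈ T) {f : α → β → ℝ}
    (hf : AEStronglyMeasurable (Function.uncurry f) (μ.prod ν))
    (hf1 : ∀ a ∈ S, ∀ b ∈ T, |f a b| ≤ 1) : Integrable (Function.uncurry f) (μ.prod ν) := by
  refine .of_bound hf 1 ?_
  filter_upwards [Measure.quasiMeasurePreserving_fst.ae hμS,
    Measure.quasiMeasurePreserving_snd.ae hνT] with z hzS hzT
  exact hf1 _ hzS _ hzT

theorem integral_exp_mul_le_of_abs_le_one {P : Measure α} [IsProbabilityMeasure P] {g : α → ℝ}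
    (hg : AEMeasurable g P) (hg1 : ∀ᵐ a ∂P, |g a| ≤ 1) {c : ℝ} (hc : |c| ≤ 1 / 2) :
    ∫ a, Real.exp (c * g a) ∂P ≤ 1 + 2 / 3 * c ^ 2 + c * ∫ a, g a ∂P := by
  have hg_int : Integrable g P := .of_bound hg.aestronglyMeasurable 1 hg1
  calc ∫ a, Real.exp (c * g a) ∂P
      ≤ ∫ a, (1 + 2 / 3 * c ^ 2 + c * g a) ∂P := by
        refine integral_mono_of_nonneg (.of_forall fun a => (Real.exp_pos _).le)
          ((integrable_const _).add (hg_int.const_mul c)) ?_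
        filter_upwards [hg1] with a ha
        have hcg : |c * g a| ≤ 1 / 2 := by
          rw [abs_mul]
          exact (mul_le_of_le_one_right (abs_nonneg c) ha).trans hc
        have hsq : (c * g a) ^ 2 ≤ c ^ 2 := by
          rw [mul_pow]
          exact mul_le_of_le_one_right (sq_nonneg c) ((sq_le_one_iff_abs_le_one _).2 ha)
        linarith [exp_le_one_add_add_two_thirds_mul_sq hcg]
    _ = 1 + 2 / 3 * c ^ 2 + c * ∫ a, g a ∂P := by
        rw [integral_add (integrable_const _) (hg_int.const_mul c), integral_const_mul,
          integral_const, probReal_univ, one_smul]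

/- Both integrals are integrals of the measures of the superlevel sets of `g - a` over the levels
in `(0, b - a]`. -/
theorem abs_integral_sub_integral_le_of_measurable {P Q : Measure α} [IsProbabilityMeasure P]
    [IsProbabilityMeasure Q] {δ : ℝ}
    (hPQ : ∀ A, MeasurableSet A → |P.real A - Q.real A| ≤ δ) {g : α → ℝ} (hg : Measurable g)
    {a b : ℝ} (hgP : ∀ᵐ x ∂P, g x ∈ Set.Icc a b)
    (hgQ : ∀ᵐ x ∂Q, g x ∈ Set.Icc a b) :
    |∫ x, g x ∂P - ∫ x, g x ∂Q| ≤ δ * (b - a) := by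
  have layercake (ρ : Measure α) [IsProbabilityMeasure ρ] (hgρ : ∀ᵐ x ∂ρ, g x ∈ Set.Icc a b) :
      ∫ x, g x ∂ρ = a + ∫ u in Set.Ioc 0 (b - a), ρ.real {x | u ≤ g x - a} := by
    have hg_int : Integrable g ρ := .of_mem_Icc a b hg.aemeasurable hgρ
    have hsub_int : Integrable (fun x => g x - a) ρ := hg_int.sub (integrable_const a)
    rw [← hsub_int.integral_eq_integral_Ioc_meas_le
      (hgρ.mono fun x hx => sub_nonneg.2 hx.1) (hgρ.mono fun x hx => sub_le_sub_right hx.2 a),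
      integral_sub hg_int (integrable_const a), integral_const, probReal_univ, one_smul,
      add_sub_cancel]
  have hlevel_int (ρ : Measure α) [IsProbabilityMeasure ρ] :
      IntegrableOn (fun u => ρ.real {x | u ≤ g x - a}) (Set.Ioc 0 (b - a)) := by
    have hanti : Antitone fun u => ρ.real {x | u ≤ g x - a} :=
      fun u v huv => measureReal_mono fun x hx => huv.trans hx
    exact (hanti.locallyIntegrable.integrableOn_isCompact isCompact_Icc).mono_set
      Set.Ioc_subset_Icc_self
  rw [layercake P hgP, layercake Q hgQ, add_sub_add_left_eq_sub,
    ← integral_sub (hlevel_int P) (hlevel_int Q), ← Real.norm_eq_abs]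
  refine (norm_setIntegral_le_of_norm_le_const measure_Ioc_lt_top fun u _ =>
    hPQ _ (measurableSet_le measurable_const (hg.sub_const a))).trans_eq ?_
  have hab : a ≤ b := hgP.exists.elim fun x hx => hx.1.trans hx.2
  rw [Real.volume_real_Ioc_of_le (sub_nonneg.2 hab), sub_zero]

theorem abs_integral_sub_integral_le_of_absolutelyContinuous {P Q : Measure α}
    [IsProbabilityMeasure P] [IsProbabilityMeasure Q] (hac : P ≪ Q) {δ : ℝ}
    (hPQ : ∀ A, MeasurableSet A → |P.real A - Q.real A| ≤ δ) {g : α → ℝ}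
    (hg : AEMeasurable g Q) {a b : ℝ} (hgQ : ∀ᵐ x ∂Q, g x ∈ Set.Icc a b) :
    |∫ x, g x ∂P - ∫ x, g x ∂Q| ≤ δ * (b - a) := by
  have hmk : ∀ᵐ x ∂Q, hg.mk g x ∈ Set.Icc a b := by
    filter_upwards [hgQ, hg.ae_eq_mk] with x hx hgx
    rwa [← hgx]
  rw [integral_congr_ae hg.ae_eq_mk, integral_congr_ae (hac.ae_eq hg.ae_eq_mk)]
  exact abs_integral_sub_integral_le_of_measurable hPQ hg.measurable_mk (hac.ae_le hmk) hmk

end Integral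

theorem add_one_mul_map_smul_add_le_of_convexOn {E : Type*} [AddCommGroup E] [Module ℝ E]
    {S : Set E} {φ : E → ℝ} (hφ : ConvexOn ℝ S φ) {z s : E} (hz : z ∈ S) (hs : s ∈ S) {t : ℝ}
    (ht : 0 ≤ t) : (t + 1) * φ ((t + 1)⁻¹ • (t • z + s)) ≤ t * φ z + φ s := by
  have hmean : φ ((t + 1)⁻¹ • (t • z + s)) ≤ (t + 1)⁻¹ * t * φ z + (t + 1)⁻¹ * φ s := by
    rw [smul_add, smul_smul]
    exact hφ.2 hz hs (by positivity) (by positivity) (by field_simp)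
  calc (t + 1) * φ ((t + 1)⁻¹ • (t • z + s))
      ≤ (t + 1) * ((t + 1)⁻¹ * t * φ z + (t + 1)⁻¹ * φ s) := by gcongr
    _ = t * φ z + φ s := by field_simp

section Factor

variable {E Ω : Type*} [AddCommGroup E] [Module ℝ E] [MeasurableSpace Ω] {ν : Measure Ω}
  [IsFiniteMeasure ν] [NeZero ν] {S : Set E} {T : Set Ω} {f : E → Ω → ℝ} {ε t : ℝ} {z : E}

theorem integral_exp_mul_map_smul_add_le (hνT : ∀ᵐ τ ∂ν, τ ∈ T)
    (hconv : ∀ τ ∈ T, ConvexOn ℝ S fun s => f s τ) (hf1 : ∀ s ∈ S, ∀ τ ∈ T, |f s τ| ≤ 1)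
    (hε0 : 0 ≤ ε) (hε1 : ε ≤ 1) (ht : 0 ≤ t) (hz : z ∈ S) (hfz : AEMeasurable (f z) ν) {s : E}
    (hs : s ∈ S) (hfs : AEMeasurable (f s) ν) :
    ∫ τ, Real.exp (ε * (t + 1) / 2 * f ((t + 1)⁻¹ • (t • z + s)) τ) ∂ν ≤
      (∫ τ, Real.exp (ε * t / 2 * f z τ) ∂ν) *
        (1 + ε ^ 2 / 6 + ε / 2 * ∫ τ, f s τ ∂ν.tilted (fun τ => ε * t / 2 * f z τ)) := by
  set h : Ω → ℝ := fun τ => ε * t / 2 * f z τ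
  have hexp : Integrable (fun τ => Real.exp (h τ)) ν :=
    integrable_exp_mul_of_abs_le_one hfz (hνT.mono (hf1 z hz)) _
  have hprob := isProbabilityMeasure_tilted hexp
  have hfs1 : ∀ᵐ τ ∂ν, |f s τ| ≤ 1 := hνT.mono (hf1 s hs)
  have hac := tilted_absolutelyContinuous ν h
  have hexp_fs : Integrable (fun τ => Real.exp (ε / 2 * f s τ)) (ν.tilted h) :=
    integrable_exp_mul_of_abs_le_one (hfs.mono_ac hac) (hac.ae_le hfs1) _
  calc ∫ τ, Real.exp (ε * (t + 1) / 2 * f ((t + 1)⁻¹ • (t • z + s)) τ) ∂ν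
      ≤ ∫ τ, Real.exp ((h + fun τ => ε / 2 * f s τ) τ) ∂ν := by
        refine integral_mono_of_nonneg (.of_forall fun τ => (Real.exp_pos _).le) ?_ ?_
        · simpa only [Pi.add_apply, Real.exp_add, smul_eq_mul] using
            (integrable_tilted_iff hexp _).1 hexp_fs
        · filter_upwards [hνT] with τ hτ
          have hmean := add_one_mul_map_smul_add_le_of_convexOn (hconv τ hτ) hz hs ht
          have := mul_le_mul_of_nonneg_left hmean (by positivity : 0 ≤ ε / 2)
          simp only [Pi.add_apply, h, Real.exp_le_exp]
          linarith
    _ = (∫ τ, Real.exp (h τ) ∂ν) * ∫ τ, Real.exp (ε / 2 * f s τ) ∂ν.tilted h := by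
        rw [integral_exp_tilted, mul_div_cancel₀ _ (integral_exp_pos hexp).ne']
    _ ≤ _ := by
        have hε : |ε / 2| ≤ 1 / 2 := by
          rw [abs_of_nonneg (by positivity)]
          linarith
        refine mul_le_mul_of_nonneg_left ?_ (integral_exp_pos hexp).le
        exact (integral_exp_mul_le_of_abs_le_one (hfs.mono_ac hac) (hac.ae_le hfs1) hε).trans_eq
          (by ring)

/- The two contributions to `5 / 12` are `1 / 6` from the expansion of the exponential and `1 / 4`
from comparing `P'` with `P` on a function with values in `[-1, 1]`. -/
theorem integral_integral_exp_mul_map_smul_add_le [MeasurableSpace E] {P P' : Measure E}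
    [IsProbabilityMeasure P] [IsProbabilityMeasure P'] (hac : P' ≪ P) (hPS : ∀ᵐ s ∂P, s ∈ S)
    (hνT : ∀ᵐ τ ∂ν, τ ∈ T) (hf : AEStronglyMeasurable (Function.uncurry f) (P.prod ν))
    (hconv : ∀ τ ∈ T, ConvexOn ℝ S fun s => f s τ) (hf1 : ∀ s ∈ S, ∀ τ ∈ T, |f s τ| ≤ 1)
    (hε0 : 0 ≤ ε) (hε1 : ε ≤ 1) (ht : 0 ≤ t) (hz : z ∈ S) (hfz : AEMeasurable (f z) ν)
    (htv : ∀ A, MeasurableSet A → |P'.real A - P.real A| ≤ ε / 4) :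
    ∫ s, ∫ τ, Real.exp (ε * (t + 1) / 2 * f ((t + 1)⁻¹ • (t • z + s)) τ) ∂ν ∂P' ≤
      (∫ τ, Real.exp (ε * t / 2 * f z τ) ∂ν) *
        (1 + 5 / 12 * ε ^ 2 +
          ε / 2 * ∫ s, ∫ τ, f s τ ∂ν.tilted (fun τ => ε * t / 2 * f z τ) ∂P) := by
  set h : Ω → ℝ := fun τ => ε * t / 2 * f z τ
  have hexp : Integrable (fun τ => Real.exp (h τ)) ν :=
    integrable_exp_mul_of_abs_le_one hfz (hνT.mono (hf1 z hz)) _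
  have hprob := isProbabilityMeasure_tilted hexp
  have hacν := tilted_absolutelyContinuous ν h
  have hG : AEStronglyMeasurable (fun s => ∫ τ, f s τ ∂ν.tilted h) P :=
    (hf.mono_ac (Measure.AbsolutelyContinuous.rfl.prod hacν)).integral_prod_right'
  have hG1 : ∀ᵐ s ∂P, ∫ τ, f s τ ∂ν.tilted h ∈ Set.Icc (-1 : ℝ) 1 := by
    filter_upwards [hPS] with s hs
    have hfs1 : ∀ᵐ τ ∂ν.tilted h, ‖f s τ‖ ≤ 1 := hacν.ae_le (hνT.mono (hf1 s hs))
    simpa only [probReal_univ, mul_one, Real.norm_eq_abs, abs_le, Set.mem_Icc] using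
      norm_integral_le_of_norm_le_const hfs1
  have hG_int : Integrable (fun s => ∫ τ, f s τ ∂ν.tilted h) P' :=
    .of_mem_Icc (-1) 1 (hG.aemeasurable.mono_ac hac) (hac.ae_le hG1)
  have hcompare := (abs_le.1 (abs_integral_sub_integral_le_of_absolutelyContinuous hac htv
    hG.aemeasurable hG1)).2
  calc ∫ s, ∫ τ, Real.exp (ε * (t + 1) / 2 * f ((t + 1)⁻¹ • (t • z + s)) τ) ∂ν ∂P'
      ≤ ∫ s, (∫ τ, Real.exp (h τ) ∂ν) *
          (1 + ε ^ 2 / 6 + ε / 2 * ∫ τ, f s τ ∂ν.tilted h) ∂P' := by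
        refine integral_mono_of_nonneg
          (.of_forall fun s => integral_nonneg fun τ => (Real.exp_pos _).le)
          (((integrable_const _).add (hG_int.const_mul _)).const_mul _) ?_
        filter_upwards [hac.ae_le hPS, hac.ae_le hf.prodMk_left] with s hs hfs
        exact integral_exp_mul_map_smul_add_le hνT hconv hf1 hε0 hε1 ht hz hfz hs hfs.aemeasurable
    _ = (∫ τ, Real.exp (h τ) ∂ν) *
          (1 + ε ^ 2 / 6 + ε / 2 * ∫ s, ∫ τ, f s τ ∂ν.tilted h ∂P') := by
        rw [integral_const_mul, integral_add (integrable_const _) (hG_int.const_mul _),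
          integral_const_mul, integral_const, probReal_univ, one_smul]
    _ ≤ _ := by
        refine mul_le_mul_of_nonneg_left ?_ (integral_exp_pos hexp).le
        linarith [mul_le_mul_of_nonneg_left hcompare (by positivity : 0 ≤ ε / 2)]

end Factor

theorem potential_factors_mul_le {ε : ℝ} (hε : |ε| ≤ 1) (v : ℝ) :
    (1 + 5 / 12 * ε ^ 2 + -(ε / 2) * v) * (1 + 5 / 12 * ε ^ 2 + ε / 2 * v) ≤
      1 + 43 / 36 * ε ^ 2 := by
  have hε2 : ε ^ 2 ≤ 1 := (sq_le_one_iff_abs_le_one ε).2 hε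
  calc (1 + 5 / 12 * ε ^ 2 + -(ε / 2) * v) * (1 + 5 / 12 * ε ^ 2 + ε / 2 * v)
      = (1 + 5 / 12 * ε ^ 2) ^ 2 - (ε / 2 * v) ^ 2 := by ring
    _ ≤ (1 + 5 / 12 * ε ^ 2) ^ 2 := sub_le_self _ (sq_nonneg _)
    _ ≤ 1 + 43 / 36 * ε ^ 2 := by nlinarith [sq_nonneg ε]

theorem integral_integral_exp_mul_integral_exp_le {E E' : Type*} [AddCommGroup E] [Module ℝ E]
    [MeasurableSpace E] [AddCommGroup E'] [Module ℝ E'] [MeasurableSpace E']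
    {μ : Measure E} [IsFiniteMeasure μ] {ν : Measure E'} [IsFiniteMeasure ν] {X : Set E}
    {Y : Set E'} (hμX : ∀ᵐ ξ ∂μ, ξ ∈ X) (hνY : ∀ᵐ η ∂ν, η ∈ Y) {F : E → E' → ℝ}
    (hF : AEStronglyMeasurable (Function.uncurry F) (μ.prod ν))
    (hFconv : ∀ η ∈ Y, ConvexOn ℝ X fun ξ => F ξ η)
    (hFconc : ∀ ξ ∈ X, ConcaveOn ℝ Y fun η => F ξ η)
    (hFbd : ∀ ξ ∈ X, ∀ η ∈ Y, |F ξ η| ≤ 1)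
    {ε t : ℝ} (hε0 : 0 ≤ ε) (hε1 : ε ≤ 1) (ht : 0 ≤ t)
    {x : E} (hx : x ∈ X) (hFx : AEMeasurable (fun η => F x η) ν)
    {y : E'} (hy : y ∈ Y) (hFy : AEMeasurable (fun ξ => F ξ y) μ)
    {P : Measure E} [IsProbabilityMeasure P] (hP : P ≪ μ)
    {Q : Measure E'} [IsProbabilityMeasure Q] (hQ : Q ≪ ν)
    (hP_tv : ∀ A, MeasurableSet A →
      |P.real A - (μ.tilted fun ξ => -(ε * t / 2) * F ξ y).real A| ≤ ε / 4)
    (hQ_tv : ∀ B, MeasurableSet B →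
      |Q.real B - (ν.tilted fun η => ε * t / 2 * F x η).real B| ≤ ε / 4) :
    ∫ ξ, ∫ η, (∫ ξ', Real.exp (-(ε * (t + 1) / 2) * F ξ' ((t + 1)⁻¹ • (t • y + η))) ∂μ) *
        (∫ η', Real.exp (ε * (t + 1) / 2 * F ((t + 1)⁻¹ • (t • x + ξ)) η') ∂ν) ∂Q ∂P ≤
      (1 + 43 / 36 * ε ^ 2) * (∫ ξ, Real.exp (-(ε * t / 2) * F ξ y) ∂μ) *
        ∫ η, Real.exp (ε * t / 2 * F x η) ∂ν := by
  have hμ : NeZero μ := ⟨fun h => IsProbabilityMeasure.ne_zero P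
    (Measure.absolutelyContinuous_zero_iff.1 (h ▸ hP))⟩
  have hν : NeZero ν := ⟨fun h => IsProbabilityMeasure.ne_zero Q
    (Measure.absolutelyContinuous_zero_iff.1 (h ▸ hQ))⟩
  have hp := integrable_exp_mul_of_abs_le_one hFy (hμX.mono fun ξ hξ => hFbd ξ hξ y hy)
    (-(ε * t / 2))
  have hq := integrable_exp_mul_of_abs_le_one hFx (hνY.mono (hFbd x hx)) (ε * t / 2)
  have hp_prob := isProbabilityMeasure_tilted hp
  have hq_prob := isProbabilityMeasure_tilted hq
  set p := μ.tilted fun ξ => -(ε * t / 2) * F ξ y with hp_def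
  set q := ν.tilted fun η => ε * t / 2 * F x η
  have hpμ : p ≪ μ := tilted_absolutelyContinuous _ _
  have hqν : q ≪ ν := tilted_absolutelyContinuous _ _
  have hYfactor := integral_integral_exp_mul_map_smul_add_le (f := fun ξ η => F ξ η)
    (hP.trans (absolutelyContinuous_tilted hp)) (hpμ.ae_le hμX) hνY
    (hF.mono_ac (hpμ.prod .rfl)) hFconv hFbd hε0 hε1 ht hx hFx hP_tv
  have hXfactor := integral_integral_exp_mul_map_smul_add_le (f := fun η ξ => -F ξ η)
    (hQ.trans (absolutelyContinuous_tilted hq)) (hqν.ae_le hνY) hμX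
    (hF.mono_ac (Measure.AbsolutelyContinuous.rfl.prod hqν)).prod_swap.neg
    (fun ξ hξ => (hFconc ξ hξ).neg)
    (fun η hη ξ hξ => (abs_neg _).trans_le (hFbd ξ hξ η hη)) hε0 hε1 ht hy hFy.neg hQ_tv
  have hF_int : Integrable (Function.uncurry F) (p.prod q) :=
    integrable_uncurry_of_abs_le_one (hpμ.ae_le hμX) (hqν.ae_le hνY) (hF.mono_ac (hpμ.prod hqν))
      hFbd
  simp only [mul_neg, ← neg_mul, integral_neg, ← hp_def] at hXfactor
  rw [← integral_integral_swap hF_int] at hXfactor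
  simp only [integral_mul_const, integral_const_mul]
  set v := ∫ ξ, ∫ η, F ξ η ∂q ∂p
  set I := ∫ ξ, Real.exp (-(ε * t / 2) * F ξ y) ∂μ
  set J := ∫ η, Real.exp (ε * t / 2 * F x η) ∂ν
  calc _ ≤ (I * (1 + 5 / 12 * ε ^ 2 + -(ε / 2) * v)) * (J * (1 + 5 / 12 * ε ^ 2 + ε / 2 * v)) :=
        mul_le_mul hXfactor hYfactor (by positivity) (le_trans (by positivity) hXfactor)
    _ = (1 + 5 / 12 * ε ^ 2 + -(ε / 2) * v) * (1 + 5 / 12 * ε ^ 2 + ε / 2 * v) * I * J := by ring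
    _ ≤ (1 + 43 / 36 * ε ^ 2) * I * J := by
        gcongr
        exact potential_factors_mul_le ((abs_of_nonneg hε0).trans_le hε1) v

/-- The law of a sample drawn with probability proportional to the nonnegative function `p`: the
measure with density `p / ∫ p` with respect to `μ`. It is the zero measure if `∫ p = 0`. -/
noncomputable def withNormalizedDensity {α : Type*} [MeasurableSpace α] (μ : Measure α)
    (p : α → ℝ) : Measure α :=
  μ.withDensity fun a => ENNReal.ofReal (p a / ∫ b, p b ∂μ)

section NormalizedDensity

variable {α β : Type*} [MeasurableSpace α] [MeasurableSpace β] {μ : Measure α} {ν : Measure β}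
  {p : α → ℝ} {q : β → ℝ}

theorem withNormalizedDensity_absolutelyContinuous (μ : Measure α) (p : α → ℝ) :
    withNormalizedDensity μ p ≪ μ :=
  withDensity_absolutelyContinuous _ _

theorem withNormalizedDensity_apply (hp : Integrable p μ) (hp0 : 0 ≤ p) {A : Set α}
    (hA : MeasurableSet A) :
    withNormalizedDensity μ p A = ENNReal.ofReal ((∫ a in A, p a ∂μ) / ∫ a, p a ∂μ) := by
  rw [withNormalizedDensity, withDensity_apply _ hA, ← ofReal_integral_eq_lintegral_ofReal
    (hp.div_const _).integrableOn (.of_forall fun a => div_nonneg (hp0 a) (integral_nonneg hp0)),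
    integral_div]

theorem isProbabilityMeasure_withNormalizedDensity (hp : Integrable p μ) (hp0 : 0 ≤ p)
    (hp_pos : 0 < ∫ a, p a ∂μ) : IsProbabilityMeasure (withNormalizedDensity μ p) where
  measure_univ := by
    rw [withNormalizedDensity_apply hp hp0 .univ, setIntegral_univ, div_self hp_pos.ne',
      ENNReal.ofReal_one]

theorem measureReal_withNormalizedDensity (hp : Integrable p μ) (hp0 : 0 ≤ p) {A : Set α}
    (hA : MeasurableSet A) :
    (withNormalizedDensity μ p).real A = (∫ a in A, p a ∂μ) / ∫ a, p a ∂μ := by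
  rw [measureReal_def, withNormalizedDensity_apply hp hp0 hA,
    ENNReal.toReal_ofReal (div_nonneg (integral_nonneg hp0) (integral_nonneg hp0))]

theorem integral_withNormalizedDensity (hp : AEMeasurable p μ) (hp0 : 0 ≤ p) (g : α → ℝ) :
    ∫ a, g a ∂withNormalizedDensity μ p = (∫ a, g a * p a ∂μ) / ∫ a, p a ∂μ := by
  rw [withNormalizedDensity, integral_withDensity_eq_integral_toReal_smul₀
    (hp.div_const _).ennreal_ofReal (.of_forall fun _ => ENNReal.ofReal_lt_top), ← integral_div]
  refine integral_congr_ae (.of_forall fun a => ?_)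
  simp only [smul_eq_mul, ENNReal.toReal_ofReal (div_nonneg (hp0 a) (integral_nonneg hp0))]
  ring

theorem integral_integral_withNormalizedDensity (hp : AEMeasurable p μ) (hp0 : 0 ≤ p)
    (hq : AEMeasurable q ν) (hq0 : 0 ≤ q) (g : α → β → ℝ) :
    ∫ a, ∫ b, g a b ∂withNormalizedDensity ν q ∂withNormalizedDensity μ p =
      (∫ a, ∫ b, g a b * (p a * q b) ∂ν ∂μ) / ((∫ a, p a ∂μ) * ∫ b, q b ∂ν) := by
  have hinner (a : α) : (∫ b, g a b ∂withNormalizedDensity ν q) * p a =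
      (∫ b, g a b * (p a * q b) ∂ν) / ∫ b, q b ∂ν := by
    rw [integral_withNormalizedDensity hq hq0, div_mul_eq_mul_div, ← integral_mul_const]
    simp only [mul_assoc, mul_comm (p a)]
  simp only [integral_withNormalizedDensity hp hp0, hinner, integral_div, div_div,
    mul_comm (∫ a, p a ∂μ)]

theorem measureReal_tilted (f : α → ℝ) {A : Set α} (hA : MeasurableSet A) :
    (μ.tilted f).real A = (∫ a in A, Real.exp (f a) ∂μ) / ∫ a, Real.exp (f a) ∂μ := by
  rw [measureReal_def, tilted_apply_eq_ofReal_integral' f hA, integral_div,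
    ENNReal.toReal_ofReal (by positivity)]

theorem abs_measureReal_withNormalizedDensity_sub_tilted_le {S : Set α} (hS : NullMeasurableSet S μ)
    (hp : IntegrableOn p S μ) (hp0 : 0 ≤ p) {f : α → ℝ} {δ : ℝ}
    (hpf : ∀ S' ⊆ S, MeasurableSet S' →
      |(∫ a in S', p a ∂μ) / (∫ a in S, p a ∂μ) -
        (∫ a in S', Real.exp (f a) ∂μ) / (∫ a in S, Real.exp (f a) ∂μ)| ≤ δ)
    (A : Set α) (hA : MeasurableSet A) :
    |(withNormalizedDensity (μ.restrict S) p).real A - ((μ.restrict S).tilted f).real A| ≤ δ := by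
  obtain ⟨S₀, hS₀S, hS₀, hS₀_ae⟩ := hS.exists_measurable_subset_ae_eq
  have hrestrict : (μ.restrict S).restrict A = μ.restrict (A ∩ S₀) := by
    rw [← Measure.restrict_congr_set hS₀_ae, Measure.restrict_restrict hA]
  rw [measureReal_withNormalizedDensity hp hp0 hA, measureReal_tilted f hA, hrestrict]
  exact hpf _ (Set.inter_subset_right.trans hS₀S) (hA.inter hS₀)

end NormalizedDensity

theorem stmt_8_general {E E' : Type*} [NormedAddCommGroup E] [NormedSpace ℝ E]
    [MeasurableSpace E] [OpensMeasurableSpace E] [NormedAddCommGroup E'] [NormedSpace ℝ E']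
    [MeasurableSpace E'] [OpensMeasurableSpace E'] [SecondCountableTopologyEither E E']
    {μ : Measure E} [SFinite μ] {ν : Measure E'} [SFinite ν]
    {X : Set E} {Y : Set E'} (hX : NullMeasurableSet X μ) (hY : NullMeasurableSet Y ν)
    (hXfin : μ X ≠ ⊤) (hYfin : ν Y ≠ ⊤) {F : E → E' → ℝ}
    (hFcont : ContinuousOn (fun z : E × E' => F z.1 z.2) (X ×ˢ Y))
    (hFconv : ∀ η ∈ Y, ConvexOn ℝ X fun ξ => F ξ η)
    (hFconc : ∀ ξ ∈ X, ConcaveOn ℝ Y fun η => F ξ η)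
    (hFbd : ∀ ξ ∈ X, ∀ η ∈ Y, |F ξ η| ≤ 1)
    {ε t : ℝ} (hε0 : 0 ≤ ε) (hε1 : ε ≤ 1) (ht : 0 ≤ t) {x : E} (hx : x ∈ X) {y : E'} (hy : y ∈ Y)
    {phat : E → ℝ} {qhat : E' → ℝ} (hphat_nn : 0 ≤ phat) (hqhat_nn : 0 ≤ qhat)
    (hphat_int : IntegrableOn phat X μ) (hqhat_int : IntegrableOn qhat Y ν)
    (hphat_pos : 0 < ∫ ξ in X, phat ξ ∂μ) (hqhat_pos : 0 < ∫ η in Y, qhat η ∂ν)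
    (hphat_tv : ∀ X' ⊆ X, MeasurableSet X' →
      |(∫ ξ in X', phat ξ ∂μ) / (∫ ξ in X, phat ξ ∂μ) -
        (∫ ξ in X', Real.exp (-(ε * t / 2) * F ξ y) ∂μ) /
          (∫ ξ in X, Real.exp (-(ε * t / 2) * F ξ y) ∂μ)| ≤ ε / 4)
    (hqhat_tv : ∀ Y' ⊆ Y, MeasurableSet Y' →
      |(∫ η in Y', qhat η ∂ν) / (∫ η in Y, qhat η ∂ν) -
        (∫ η in Y', Real.exp (ε * t / 2 * F x η) ∂ν) /
          (∫ η in Y, Real.exp (ε * t / 2 * F x η) ∂ν)| ≤ ε / 4) :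
    (∫ ξ in X, ∫ η in Y,
        (∫ ξ' in X, Real.exp (-(ε * (t + 1) / 2) * F ξ' ((t + 1)⁻¹ • (t • y + η))) ∂μ) *
          (∫ η' in Y, Real.exp (ε * (t + 1) / 2 * F ((t + 1)⁻¹ • (t • x + ξ)) η') ∂ν) *
          (phat ξ * qhat η) ∂ν ∂μ) / ((∫ ξ in X, phat ξ ∂μ) * (∫ η in Y, qhat η ∂ν))
      ≤ (1 + 43 / 36 * ε ^ 2) * (∫ ξ in X, Real.exp (-(ε * t / 2) * F ξ y) ∂μ) *
        (∫ η in Y, Real.exp (ε * t / 2 * F x η) ∂ν) := by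
  have hμ : IsFiniteMeasure (μ.restrict X) := isFiniteMeasure_restrict.2 hXfin
  have hν : IsFiniteMeasure (ν.restrict Y) := isFiniteMeasure_restrict.2 hYfin
  have hF : AEStronglyMeasurable (Function.uncurry F) ((μ.restrict X).prod (ν.restrict Y)) := by
    rw [Measure.prod_restrict]
    exact (hFcont.aemeasurable₀ (hX.prod hY)).aestronglyMeasurable
  have hP := isProbabilityMeasure_withNormalizedDensity hphat_int hphat_nn hphat_pos
  have hQ := isProbabilityMeasure_withNormalizedDensity hqhat_int hqhat_nn hqhat_pos
  rw [← integral_integral_withNormalizedDensity hphat_int.aemeasurable hphat_nn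
    hqhat_int.aemeasurable hqhat_nn]
  exact integral_integral_exp_mul_integral_exp_le (ae_restrict_mem₀ hX) (ae_restrict_mem₀ hY) hF
    hFconv hFconc hFbd hε0 hε1 ht hx ((hFcont.uncurry_left x hx).aemeasurable₀ hY)
    hy ((hFcont.uncurry_right y hy).aemeasurable₀ hX)
    (withNormalizedDensity_absolutelyContinuous _ _)
    (withNormalizedDensity_absolutelyContinuous _ _)
    (abs_measureReal_withNormalizedDensity_sub_tilted_le hX hphat_int hphat_nn hphat_tv)
    (abs_measureReal_withNormalizedDensity_sub_tilted_le hY hqhat_int hqhat_nn hqhat_tv)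

/-- The conditional form of Lemma 5 of the paper: when `ξ` and `η` are sampled
independently from approximate distributions within total variation distance `ε/4` of the
exponential-weight distributions, the expected potential `Φ(t+1) = P(ξ,η)·Q(ξ,η)` is at
most `(1 + (43/36)ε²) Φ(t)`, where `Φ(t) = ‖p‖₁‖q‖₁`. -/
theorem stmt_8 {m n : ℕ} (X : Set (Fin m → ℝ)) (Y : Set (Fin n → ℝ))
    (hXne : X.Nonempty) (hYne : Y.Nonempty)
    (hXbd : Bornology.IsBounded X) (hYbd : Bornology.IsBounded Y)
    (hXconv : Convex ℝ X) (hYconv : Convex ℝ Y)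
    (hX0 : 0 < volume X) (hXfin : volume X < ⊤)
    (hY0 : 0 < volume Y) (hYfin : volume Y < ⊤)
    (F : (Fin m → ℝ) → (Fin n → ℝ) → ℝ)
    (hFcont : ContinuousOn (fun p : (Fin m → ℝ) × (Fin n → ℝ) => F p.1 p.2) (X ×ˢ Y))
    (hFconv : ∀ η ∈ Y, ConvexOn ℝ X fun ξ => F ξ η)
    (hFconc : ∀ ξ ∈ X, ConcaveOn ℝ Y fun η => F ξ η)
    (hFbd : ∀ ξ ∈ X, ∀ η ∈ Y, |F ξ η| ≤ 1)
    (ε t : ℝ) (hε0 : 0 < ε) (hε1 : ε ≤ 1) (ht : 0 ≤ t)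
    (x : Fin m → ℝ) (hx : x ∈ X) (y : Fin n → ℝ) (hy : y ∈ Y)
    (phat : (Fin m → ℝ) → ℝ) (qhat : (Fin n → ℝ) → ℝ)
    (hphat_nn : ∀ ξ, 0 ≤ phat ξ) (hqhat_nn : ∀ η, 0 ≤ qhat η)
    (hphat_int : IntegrableOn phat X volume) (hqhat_int : IntegrableOn qhat Y volume)
    (hphat_pos : 0 < ∫ ξ in X, phat ξ) (hqhat_pos : 0 < ∫ η in Y, qhat η)
    (hphat_tv : ∀ X' ⊆ X, MeasurableSet X' →
      |(∫ ξ in X', phat ξ) / (∫ ξ in X, phat ξ) -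
        (∫ ξ in X', Real.exp (-(ε * t / 2) * F ξ y)) /
          (∫ ξ in X, Real.exp (-(ε * t / 2) * F ξ y))| ≤ ε / 4)
    (hqhat_tv : ∀ Y' ⊆ Y, MeasurableSet Y' →
      |(∫ η in Y', qhat η) / (∫ η in Y, qhat η) -
        (∫ η in Y', Real.exp (ε * t / 2 * F x η)) /
          (∫ η in Y, Real.exp (ε * t / 2 * F x η))| ≤ ε / 4) :
    (∫ ξ in X, ∫ η in Y,
        (∫ ξ' in X, Real.exp (-(ε * (t + 1) / 2) * F ξ' ((t + 1)⁻¹ • (t • y + η)))) *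
          (∫ η' in Y, Real.exp (ε * (t + 1) / 2 * F ((t + 1)⁻¹ • (t • x + ξ)) η')) *
          (phat ξ * qhat η)) / ((∫ ξ in X, phat ξ) * (∫ η in Y, qhat η))
      ≤ (1 + 43 / 36 * ε ^ 2) * (∫ ξ in X, Real.exp (-(ε * t / 2) * F ξ y)) *
        (∫ η in Y, Real.exp (ε * t / 2 * F x η)) :=
  stmt_8_general (hXconv.nullMeasurableSet _) (hYconv.nullMeasurableSet _) hXfin.ne hYfin.ne
    hFcont hFconv hFconc hFbd hε0.le hε1 ht hx hy hphat_nn hqhat_nn hphat_int hqhat_int hphat_pos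
    hqhat_pos hphat_tv hqhat_tv
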